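/- Let β ∈ (−1,1). For every pair i, j ∈ {1,2,3}, the region S_{ij} = {(p,q) ∈ Δ₃ × Δ₃ : (A_β q)_i > (A_β q)_k for every k ≠ i, and (p B_β)_j > (p B_β)_l for every l ≠ j} is nonempty, and the interior equilibrium E = ((1/3,1/3,1/3),(1/3,1/3,1/3)) belongs to the topological closure of S_{ij}. -/

import Mathlib

open Set Filter Topology

/-- The point at parameter `t` on the segment from the barycentre of the simplex to vertex `v`. -/
noncomputable def towardVertex (v : Fin 3) (t : ℝ) : Fin 3 → ℝ :=
  fun k => (1 - t) / 3 + t * if k = v then 1 else 0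

lemma towardVertex_zero (v : Fin 3) : towardVertex v 0 = fun _ => (1 : ℝ) / 3 := by
  ext k
  simp [towardVertex]

lemma continuous_towardVertex (v : Fin 3) : Continuous (towardVertex v) := by
  unfold towardVertex
  fun_prop

lemma towardVertex_mem_stdSimplex (v : Fin 3) {t : ℝ} (ht : t ∈ Ioc (0 : ℝ) 1) :
    towardVertex v t ∈ stdSimplex ℝ (Fin 3) := by
  obtain ⟨h0, h1⟩ := ht
  refine ⟨fun k => ?_, ?_⟩
  · unfold towardVertex
    split_ifs <;> linarith
  · simp [towardVertex, Finset.sum_add_distrib]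
    ring

lemma mulVec_towardVertex_lt {β : ℝ} (hβ : β < 1) {t : ℝ} (ht : 0 < t) {i k : Fin 3}
    (hk : k ≠ i) :
    (!![1, 0, β; β, 1, 0; 0, β, 1] : Matrix (Fin 3) (Fin 3) ℝ).mulVec (towardVertex i t) k <
      (!![1, 0, β; β, 1, 0; 0, β, 1] : Matrix (Fin 3) (Fin 3) ℝ).mulVec (towardVertex i t) i := by
  have h : 0 < t * (1 - β) := mul_pos ht (by linarith)
  fin_cases i <;> fin_cases k <;>
    simp [Matrix.mulVec, dotProduct, Fin.sum_univ_three, towardVertex] at hk ⊢ <;> linarith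

lemma vecMul_towardVertex_lt {β : ℝ} (hβ : -1 < β) {t : ℝ} (ht : 0 < t) {j l : Fin 3}
    (hl : l ≠ j) :
    Matrix.vecMul (towardVertex (j + 2) t)
        (!![-β, 1, 0; 0, -β, 1; 1, 0, -β] : Matrix (Fin 3) (Fin 3) ℝ) l <
      Matrix.vecMul (towardVertex (j + 2) t)
        (!![-β, 1, 0; 0, -β, 1; 1, 0, -β] : Matrix (Fin 3) (Fin 3) ℝ) j := by
  have h : 0 < t * (1 + β) := mul_pos ht (by linarith)
  fin_cases j <;> fin_cases l <;>
    simp [Matrix.vecMul, dotProduct, Fin.sum_univ_three, towardVertex] at hl ⊢ <;> linarith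

/-- For β ∈ (−1,1), each pure-preference region S_{ij} of the
Shapley family is nonempty and the interior equilibrium E lies in its closure. -/
theorem stmt1 (β : ℝ) (hβ : β ∈ Set.Ioo (-1 : ℝ) 1) (i j : Fin 3) :
    let A : Matrix (Fin 3) (Fin 3) ℝ := !![1, 0, β; β, 1, 0; 0, β, 1]
    let B : Matrix (Fin 3) (Fin 3) ℝ := !![-β, 1, 0; 0, -β, 1; 1, 0, -β]
    let S : Set ((Fin 3 → ℝ) × (Fin 3 → ℝ)) :=
      {pq | pq.1 ∈ stdSimplex ℝ (Fin 3) ∧ pq.2 ∈ stdSimplex ℝ (Fin 3) ∧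
        (∀ k, k ≠ i → A.mulVec pq.2 i > A.mulVec pq.2 k) ∧
        (∀ l, l ≠ j → Matrix.vecMul pq.1 B j > Matrix.vecMul pq.1 B l)}
    S.Nonempty ∧ ((fun _ => (1 : ℝ)/3, fun _ => (1 : ℝ)/3) : (Fin 3 → ℝ) × (Fin 3 → ℝ)) ∈ closure S := by
  intro A B S
  have hS : ∀ t ∈ Ioc (0 : ℝ) 1, (towardVertex (j + 2) t, towardVertex i t) ∈ S := fun t ht =>
    ⟨towardVertex_mem_stdSimplex _ ht, towardVertex_mem_stdSimplex _ ht,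
      fun _ hk => mulVec_towardVertex_lt hβ.2 ht.1 hk,
      fun _ hl => vecMul_towardVertex_lt hβ.1 ht.1 hl⟩
  refine ⟨⟨_, hS 1 (by simp)⟩, ?_⟩
  have hcont : Continuous fun t : ℝ => (towardVertex (j + 2) t, towardVertex i t) :=
    (continuous_towardVertex _).prodMk (continuous_towardVertex _)
  have hlim := (hcont.tendsto 0).mono_left (nhdsWithin_le_nhds (s := Ioi (0 : ℝ)))
  rw [towardVertex_zero, towardVertex_zero] at hlim
  exact mem_closure_of_tendsto hlim
    (mem_of_superset (Ioc_mem_nhdsGT (zero_lt_one' ℝ)) hS)
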